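/- Let d ≥ 1 and n ≥ d+1. For every nontrivial (d-1)-cycle Z on [n] over F_2, there exists a (d-1)-cycle Z' on [n] such that Z' is the boundary of a d-hypertree on [n] and |Z ⊕ Z'| ≤ (d+1)·C(n-1,d-2) (with the convention C(m,k) = 0 for k < 0). -/

import Mathlib

open Finset symmDiff

/-- The vertex set `[n] = {1, …, n}`. -/
def rng (n : ℕ) : Finset ℕ := Finset.Icc 1 n

/-- The set of `d`-simplices (i.e. `(d+1)`-element subsets) on the vertex set `V`. -/
def simplices (V : Finset ℕ) (d : ℕ) : Finset (Finset ℕ) :=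
  V.powerset.filter fun σ => σ.card = d + 1

/-- The mod-2 boundary of a set `X` of simplices: the set of faces `τ` of codimension one
(`|τ| + 1 = |σ|`) contained in an odd number of members of `X`. -/
def bd (X : Finset (Finset ℕ)) : Finset (Finset ℕ) :=
  (X.biUnion fun σ => σ.powerset).filter
    fun τ => Odd (X.filter fun σ => τ ⊆ σ ∧ τ.card + 1 = σ.card).card

/-- A set of simplices is acyclic (a forest) over `F_2` if no nonempty subset has
empty boundary. -/
def IsAcyclic (F : Finset (Finset ℕ)) : Prop :=
  ∀ Y ⊆ F, Y ≠ ∅ → bd Y ≠ ∅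

/-- A `d`-hypertree on `V`: a maximal acyclic set of `d`-simplices on `V`. -/
def IsHypertreeOn (V : Finset ℕ) (d : ℕ) (T : Finset (Finset ℕ)) : Prop :=
  T ⊆ simplices V d ∧ IsAcyclic T ∧
    ∀ G, T ⊆ G → G ⊆ simplices V d → IsAcyclic G → G = T

/-- A simple cycle over `F_2`: a nonempty set with empty boundary, no nonempty proper
subset of which has empty boundary. -/
def IsSimpleCycle (Z : Finset (Finset ℕ)) : Prop :=
  Z ≠ ∅ ∧ bd Z = ∅ ∧ ∀ Y ⊂ Z, Y ≠ ∅ → bd Y ≠ ∅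

/-- Collapsibility: `X` can be reduced to `∅` by repeatedly removing a simplex `σ ∈ X`
containing a codimension-one face contained in no other current member of `X`. -/
inductive Collapsible : Finset (Finset ℕ) → Prop
  | empty : Collapsible ∅
  | step (X : Finset (Finset ℕ)) (σ τ : Finset ℕ) (hσ : σ ∈ X) (hτ : τ ⊆ σ)
      (hcard : τ.card + 1 = σ.card) (huniq : ∀ σ' ∈ X, τ ⊆ σ' → σ' = σ)
      (h : Collapsible (X.erase σ)) : Collapsible X

/-- The cone over `X` with apex `v`. -/
def cone (v : ℕ) (X : Finset (Finset ℕ)) : Finset (Finset ℕ) :=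
  X.image (insert v)

/-- The link of the vertex `v` in `X`. -/
def link (v : ℕ) (X : Finset (Finset ℕ)) : Finset (Finset ℕ) :=
  (X.filter fun σ => v ∈ σ).image fun σ => σ.erase v

/-- `fill Z T`: the subset `F ⊆ T` with `∂F = Z` (when it exists; it is unique when `T`
is a hypertree and `Z` a cycle). -/
noncomputable def fill (Z T : Finset (Finset ℕ)) : Finset (Finset ℕ) :=
  if h : ∃ F, F ⊆ T ∧ bd F = Z then h.choose else ∅

/-- The average filling-volume `μ(T)` of a `d`-hypertree `T` on `[n]`. -/
noncomputable def fillVolAvg (n d : ℕ) (T : Finset (Finset ℕ)) : ℝ :=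
  (∑ σ ∈ simplices (rng n) d, ((fill (bd {σ}) T).card : ℝ)) / (n.choose (d + 1) : ℝ)

open Classical in
/-- The cut of `τ` in `T`: the set of `d`-simplices `σ` on `[n]` such that
`T ⊕ {τ} ⊕ {σ}` is a `d`-hypertree on `[n]`. -/
noncomputable def cut (n d : ℕ) (τ : Finset ℕ) (T : Finset (Finset ℕ)) : Finset (Finset ℕ) :=
  (simplices (rng n) d).filter fun σ => IsHypertreeOn (rng n) d ((T ∆ {τ}) ∆ {σ})


theorem mem_bd (X : Finset (Finset ℕ)) (τ : Finset ℕ) :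
    τ ∈ bd X ↔ Odd (X.filter fun σ => τ ⊆ σ ∧ τ.card + 1 = σ.card).card := by
  unfold bd
  simp only [mem_filter, mem_biUnion, mem_powerset, and_iff_right_iff_imp]
  intro h
  obtain ⟨σ, hσ⟩ := Finset.card_pos.mp h.pos
  simp only [mem_filter] at hσ
  exact ⟨σ, hσ.1, hσ.2.1⟩

theorem odd_card_symmDiff (A B : Finset (Finset ℕ)) :
    Odd (A ∆ B).card ↔ ¬ (Odd A.card ↔ Odd B.card) := by
  have h1 : (A ∆ B).card = (A \ B).card + (B \ A).card := by
    rw [symmDiff_def, sup_eq_union, card_union_of_disjoint disjoint_sdiff_sdiff]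
  have h2 := card_sdiff_add_card_inter A B
  have h3 := card_sdiff_add_card_inter B A
  rw [inter_comm] at h3
  rw [h1]
  simp only [Nat.odd_iff]
  omega

theorem bd_symmDiff (X Y : Finset (Finset ℕ)) : bd (X ∆ Y) = bd X ∆ bd Y := by
  ext τ
  have : ((X ∆ Y).filter fun σ => τ ⊆ σ ∧ τ.card + 1 = σ.card)
      = (X.filter fun σ => τ ⊆ σ ∧ τ.card + 1 = σ.card) ∆
        (Y.filter fun σ => τ ⊆ σ ∧ τ.card + 1 = σ.card) := by
    ext σ; simp only [mem_filter, mem_symmDiff]; tauto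
  rw [mem_symmDiff, mem_bd, mem_bd, mem_bd, this, odd_card_symmDiff]
  tauto

theorem bd_empty' : bd ∅ = ∅ := by
  ext τ; rw [mem_bd]; simp

/-- no member of `X` contains `v` -/
def Av (v : ℕ) (X : Finset (Finset ℕ)) : Prop := ∀ σ ∈ X, v ∉ σ

theorem mem_cone {v : ℕ} {X : Finset (Finset ℕ)} (hX : Av v X) (τ : Finset ℕ) :
    τ ∈ cone v X ↔ v ∈ τ ∧ τ.erase v ∈ X := by
  unfold cone
  simp only [mem_image]
  constructor
  · rintro ⟨σ, hσ, rfl⟩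
    refine ⟨mem_insert_self _ _, ?_⟩
    rwa [erase_insert (hX σ hσ)]
  · rintro ⟨h1, h2⟩
    exact ⟨_, h2, insert_erase h1⟩

theorem Av_bd {v : ℕ} {X : Finset (Finset ℕ)} (hX : Av v X) : Av v (bd X) := by
  intro τ hτ hv
  rw [mem_bd] at hτ
  obtain ⟨σ, hσ⟩ := Finset.card_pos.mp hτ.pos
  simp only [mem_filter] at hσ
  exact hX σ hσ.1 (hσ.2.1 hv)

theorem Av_symmDiff {v : ℕ} {X Y : Finset (Finset ℕ)} (hX : Av v X) (hY : Av v Y) :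
    Av v (X ∆ Y) := by
  intro σ hσ
  rw [mem_symmDiff] at hσ
  rcases hσ with h | h
  · exact hX σ h.1
  · exact hY σ h.1

theorem bd_cone {v : ℕ} {X : Finset (Finset ℕ)} (hX : Av v X) :
    bd (cone v X) = X ∆ cone v (bd X) := by
  ext τ
  rw [mem_symmDiff, mem_cone (Av_bd hX), mem_bd, mem_bd]
  by_cases hv : v ∈ τ
  · have h1 : τ ∉ X := fun h => hX τ h hv
    have : ((cone v X).filter fun σ => τ ⊆ σ ∧ τ.card + 1 = σ.card)
        = (X.filter fun σ => τ.erase v ⊆ σ ∧ (τ.erase v).card + 1 = σ.card).image (insert v) := by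
      ext σ
      have hc := card_erase_add_one hv
      simp only [mem_filter, mem_image, cone]
      constructor
      · rintro ⟨⟨ρ, hρ, rfl⟩, h2, h3⟩
        refine ⟨ρ, ⟨hρ, ?_, ?_⟩, rfl⟩
        · rwa [← subset_insert_iff]
        · rw [card_insert_of_notMem (hX ρ hρ)] at h3; omega
      · rintro ⟨ρ, ⟨hρ, h2, h3⟩, rfl⟩
        refine ⟨⟨ρ, hρ, rfl⟩, ?_, ?_⟩
        · rwa [subset_insert_iff]
        · rw [card_insert_of_notMem (hX ρ hρ)]; omega
    rw [this, card_image_of_injOn]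
    · tauto
    · intro a ha b hb hab
      simp only [coe_filter, Set.mem_setOf_eq] at ha hb
      have := congrArg (fun s => s.erase v) hab
      simpa [erase_insert (hX a ha.1), erase_insert (hX b hb.1)] using this
  · have : ((cone v X).filter fun σ => τ ⊆ σ ∧ τ.card + 1 = σ.card)
        = if τ ∈ X then {insert v τ} else ∅ := by
      ext σ
      have key : σ ∈ ((cone v X).filter fun σ => τ ⊆ σ ∧ τ.card + 1 = σ.card) ↔
          τ ∈ X ∧ σ = insert v τ := by
        simp only [mem_filter, mem_image, cone]
        constructor
        · rintro ⟨⟨ρ, hρ, rfl⟩, h2, h3⟩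
          rw [card_insert_of_notMem (hX ρ hρ)] at h3
          rw [subset_insert_iff_of_notMem hv] at h2
          have := eq_of_subset_of_card_le h2 (by omega)
          subst this
          exact ⟨hρ, rfl⟩
        · rintro ⟨h, rfl⟩
          exact ⟨⟨τ, h, rfl⟩, subset_insert _ _, (card_insert_of_notMem hv).symm⟩
      rw [key]
      split_ifs with h <;> simp [h]
    rw [this]
    split_ifs with h <;> simp [h, hv]

theorem cone_symmDiff {v : ℕ} {X Y : Finset (Finset ℕ)} (hX : Av v X) (hY : Av v Y) :
    cone v (X ∆ Y) = cone v X ∆ cone v Y := by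
  ext τ
  rw [mem_cone (Av_symmDiff hX hY), mem_symmDiff, mem_symmDiff, mem_cone hX, mem_cone hY]
  tauto

theorem mem_link {v : ℕ} {X : Finset (Finset ℕ)} (τ : Finset ℕ) :
    τ ∈ link v X ↔ v ∉ τ ∧ insert v τ ∈ X := by
  simp only [link, mem_image, mem_filter]
  constructor
  · rintro ⟨σ, ⟨h1, h2⟩, rfl⟩
    exact ⟨notMem_erase _ _, by rwa [insert_erase h2]⟩
  · rintro ⟨h1, h2⟩
    exact ⟨_, ⟨h2, mem_insert_self _ _⟩, erase_insert h1⟩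

theorem Av_link (v : ℕ) (X : Finset (Finset ℕ)) : Av v (link v X) := by
  intro σ hσ
  exact ((mem_link σ).1 hσ).1

/-- the antistar -/
def anti (v : ℕ) (X : Finset (Finset ℕ)) : Finset (Finset ℕ) := X.filter fun σ => v ∉ σ

theorem Av_anti (v : ℕ) (X : Finset (Finset ℕ)) : Av v (anti v X) := by
  intro σ hσ
  exact (mem_filter.1 hσ).2

theorem decomp (v : ℕ) (X : Finset (Finset ℕ)) : X = cone v (link v X) ∆ anti v X := by
  ext τ
  rw [mem_symmDiff, mem_cone (Av_link v X), mem_link, anti, mem_filter]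
  by_cases hv : v ∈ τ
  · simp [hv, insert_erase hv]
  · simp [hv]

theorem link_decomp {v : ℕ} {X Y : Finset (Finset ℕ)} (hX : Av v X) (hY : Av v Y) :
    link v (cone v X ∆ Y) = X := by
  ext τ
  rw [mem_link, mem_symmDiff, mem_cone hX]
  constructor
  · rintro ⟨h, h1 | h1⟩
    · simpa [erase_insert h] using h1.1.2
    · exact absurd (mem_insert_self v τ) (hY _ h1.1)
  · intro h
    have := hX τ h
    refine ⟨this, Or.inl ⟨⟨mem_insert_self _ _, by rwa [erase_insert this]⟩, ?_⟩⟩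
    intro h2
    exact hY _ h2 (mem_insert_self v τ)

theorem anti_decomp {v : ℕ} {X Y : Finset (Finset ℕ)} (hX : Av v X) (hY : Av v Y) :
    anti v (cone v X ∆ Y) = Y := by
  ext τ
  rw [anti, mem_filter, mem_symmDiff, mem_cone hX]
  constructor
  · rintro ⟨h1, h2⟩
    tauto
  · intro h
    have := hY τ h
    tauto

theorem link_empty' (v : ℕ) : link v ∅ = ∅ := by simp [link]
theorem anti_empty' (v : ℕ) : anti v ∅ = ∅ := by simp [anti]
theorem cone_empty' (v : ℕ) : cone v ∅ = ∅ := by simp [cone]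
theorem Av_empty (v : ℕ) : Av v ∅ := by simp [Av]

theorem decomp_empty {v : ℕ} {X Y : Finset (Finset ℕ)} (hX : Av v X) (hY : Av v Y)
    (h : cone v X ∆ Y = ∅) : X = ∅ ∧ Y = ∅ := by
  have h1 := link_decomp hX hY
  have h2 := anti_decomp hX hY
  rw [h, link_empty'] at h1
  rw [h, anti_empty'] at h2
  exact ⟨h1.symm, h2.symm⟩

theorem bd_decomp {v : ℕ} {X Y : Finset (Finset ℕ)} (hX : Av v X) :
    bd (cone v X ∆ Y) = cone v (bd X) ∆ (X ∆ bd Y) := by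
  rw [bd_symmDiff, bd_cone hX, symmDiff_comm X, symmDiff_assoc]

theorem sd_eq_empty {X Y : Finset (Finset ℕ)} : X ∆ Y = ∅ ↔ X = Y := by
  rw [← bot_eq_empty, symmDiff_eq_bot]

theorem cycle_decomp {v : ℕ} {Z : Finset (Finset ℕ)} (h : bd Z = ∅) :
    bd (link v Z) = ∅ ∧ bd (anti v Z) = link v Z := by
  rw [decomp v Z, bd_decomp (Av_link _ _)] at h
  have := decomp_empty (Av_bd (Av_link _ _)) (Av_symmDiff (Av_link _ _) (Av_bd (Av_anti _ _))) h
  exact ⟨this.1, (sd_eq_empty.1 this.2).symm⟩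

theorem bd_single_insert {v : ℕ} {σ : Finset ℕ} (h : v ∉ σ) :
    bd {insert v σ} = cone v (bd {σ}) ∆ {σ} := by
  have : ({insert v σ} : Finset (Finset ℕ)) = cone v {σ} := by simp [cone]
  rw [this, bd_cone, symmDiff_comm]
  simpa [Av] using h

theorem bd_single_empty : bd {∅} = ∅ := by
  ext τ; rw [mem_bd]; simp [filter_singleton]

theorem bd_bd_single (σ : Finset ℕ) : bd (bd {σ}) = ∅ := by
  induction σ using Finset.induction_on with
  | empty => rw [bd_single_empty, bd_empty']
  | insert v σ h ih =>
    have hA : Av v {σ} := by simpa [Av] using h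
    rw [bd_single_insert h, bd_decomp (Av_bd hA), ih, cone_empty', symmDiff_self]
    simp

theorem bd_bd (X : Finset (Finset ℕ)) : bd (bd X) = ∅ := by
  induction X using Finset.induction_on with
  | empty => rw [bd_empty', bd_empty']
  | insert σ X h ih =>
    have : insert σ X = {σ} ∆ X := by
      ext τ
      rw [mem_insert, mem_symmDiff, mem_singleton]
      by_cases hh : τ = σ
      · subst hh; simp [h]
      · simp [hh]
    rw [this, bd_symmDiff, bd_symmDiff, bd_bd_single, ih, symmDiff_self]
    rfl

/-- families of `k`-subsets of `V` -/
abbrev PC (V : Finset ℕ) (k : ℕ) : Finset (Finset ℕ) := powersetCard k V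

theorem sd_sub {X Y P : Finset (Finset ℕ)} (hX : X ⊆ P) (hY : Y ⊆ P) : X ∆ Y ⊆ P := by
  intro σ hσ
  rw [mem_symmDiff] at hσ
  rcases hσ with h | h
  · exact hX h.1
  · exact hY h.1

theorem bd_sub {X : Finset (Finset ℕ)} {V : Finset ℕ} {k : ℕ} (h : X ⊆ PC V (k + 1)) :
    bd X ⊆ PC V k := by
  intro τ hτ
  rw [mem_bd] at hτ
  obtain ⟨σ, hσ⟩ := Finset.card_pos.mp hτ.pos
  simp only [mem_filter] at hσ
  have := mem_powersetCard.1 (h hσ.1)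
  rw [mem_powersetCard]
  exact ⟨hσ.2.1.trans this.1, by omega⟩

theorem Av_of_sub {X : Finset (Finset ℕ)} {V : Finset ℕ} {k v : ℕ} (h : X ⊆ PC V k)
    (hv : v ∉ V) : Av v X := by
  intro σ hσ h2
  exact hv ((mem_powersetCard.1 (h hσ)).1 h2)

theorem cone_sub {X : Finset (Finset ℕ)} {V : Finset ℕ} {k v : ℕ} (h : X ⊆ PC V k)
    (hv : v ∉ V) : cone v X ⊆ PC (insert v V) (k + 1) := by
  intro σ hσ
  rw [mem_cone (Av_of_sub h hv)] at hσ
  have := mem_powersetCard.1 (h hσ.2)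
  rw [mem_powersetCard, subset_insert_iff]
  have h3 := card_erase_add_one hσ.1
  exact ⟨this.1, by omega⟩

theorem PC_mono {V : Finset ℕ} {k v : ℕ} : PC V k ⊆ PC (insert v V) k :=
  powersetCard_mono (subset_insert _ _)

theorem link_sub {X : Finset (Finset ℕ)} {V : Finset ℕ} {k v : ℕ}
    (h : X ⊆ PC (insert v V) (k + 1)) : link v X ⊆ PC V k := by
  intro σ hσ
  rw [mem_link] at hσ
  have := mem_powersetCard.1 (h hσ.2)
  rw [card_insert_of_notMem hσ.1, subset_insert_iff, erase_insert hσ.1] at this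
  exact mem_powersetCard.2 ⟨this.1, by omega⟩

theorem anti_sub {X : Finset (Finset ℕ)} {V : Finset ℕ} {k v : ℕ}
    (h : X ⊆ PC (insert v V) k) : anti v X ⊆ PC V k := by
  intro σ hσ
  rw [anti, mem_filter] at hσ
  have := mem_powersetCard.1 (h hσ.1)
  rw [subset_insert_iff_of_notMem hσ.2] at this
  exact mem_powersetCard.2 this

/-- hypertrees, with the spanning property in place of maximality -/
structure HT (V : Finset ℕ) (d : ℕ) (T : Finset (Finset ℕ)) : Prop where
  sub : T ⊆ PC V (d + 1)
  acyc : ∀ Y ⊆ T, bd Y = ∅ → Y = ∅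
  span : ∀ Z ⊆ PC V d, bd Z = ∅ → ∃ X ⊆ T, bd X = Z

theorem HT.isHypertree {V : Finset ℕ} {d : ℕ} {T : Finset (Finset ℕ)} (h : HT V d T) :
    IsHypertreeOn V d T := by
  have hs : simplices V d = PC V (d + 1) := by
    ext σ; simp [simplices, mem_powersetCard]
  refine ⟨hs ▸ h.sub, fun Y hY hne h0 => hne (h.acyc Y hY h0), ?_⟩
  intro G hTG hG hac
  refine Subset.antisymm ?_ hTG
  intro σ hσ
  by_contra hσT
  have h1 : ({σ} : Finset (Finset ℕ)) ⊆ PC V (d + 1) := by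
    rw [← hs]; simpa using hG hσ
  obtain ⟨X, hX, hXb⟩ := h.span _ (bd_sub h1) (bd_bd _)
  refine hac (X ∆ {σ}) (sd_sub (hX.trans hTG) (by simpa using hσ)) ?_ ?_
  · intro h0
    rw [sd_eq_empty] at h0
    apply hσT
    apply hX
    rw [h0]; simp
  · rw [bd_symmDiff, hXb, symmDiff_self]; rfl

theorem HT.cone {V : Finset ℕ} {d v : ℕ} {T S : Finset (Finset ℕ)} (hv : v ∉ V)
    (hT : HT V d T) (hS : HT V (d + 1) S) : HT (insert v V) (d + 1) (cone v T ∆ S) where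
  sub := sd_sub (cone_sub hT.sub hv) (hS.sub.trans PC_mono)
  acyc := by
    intro Y hY h0
    have hTa := Av_of_sub hT.sub hv
    have hSa := Av_of_sub hS.sub hv
    have hL : link v Y ⊆ T := by
      intro σ hσ
      rw [← link_decomp hTa hSa]
      rw [mem_link] at hσ ⊢
      exact ⟨hσ.1, hY hσ.2⟩
    have hR : anti v Y ⊆ S := by
      rw [← anti_decomp hTa hSa]
      exact filter_subset_filter _ hY
    obtain ⟨h1, h2⟩ := cycle_decomp (v := v) h0
    have e1 := hT.acyc _ hL h1
    rw [e1] at h2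
    have e2 := hS.acyc _ hR h2
    rw [decomp v Y, e1, e2, cone_empty', symmDiff_self]; rfl
  span := by
    intro Z hZ h0
    obtain ⟨h1, h2⟩ := cycle_decomp (v := v) h0
    obtain ⟨A, hA, hAb⟩ := hT.span _ (link_sub hZ) h1
    obtain ⟨B, hB, hBb⟩ := hS.span (anti v Z ∆ A) (sd_sub (anti_sub hZ) (hA.trans hT.sub))
      (by rw [bd_symmDiff, h2, hAb, symmDiff_self]; rfl)
    have hTa := Av_of_sub hT.sub hv
    have hSa := Av_of_sub hS.sub hv
    have hAa := Av_of_sub (hA.trans hT.sub) hv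
    have hBa := Av_of_sub (hB.trans hS.sub) hv
    refine ⟨_root_.cone v A ∆ B, ?_, ?_⟩
    · intro τ hτ
      rw [mem_symmDiff, mem_cone hAa] at hτ
      rw [mem_symmDiff, mem_cone hTa]
      rcases hτ with ⟨⟨h3, h4⟩, h5⟩ | ⟨h3, h4⟩
      · exact Or.inl ⟨⟨h3, hA h4⟩, fun h => hSa _ h h3⟩
      · exact Or.inr ⟨hB h3, fun h => hBa _ h3 h.1⟩
    · rw [bd_decomp hAa, hAb, hBb]
      conv_rhs => rw [decomp v Z]
      congr 1
      rw [symmDiff_comm (anti v Z), symmDiff_symmDiff_cancel_left]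

/-- `W` differs from a hypertree by at most `k` simplices -/
def Ap (V : Finset ℕ) (d k : ℕ) (W : Finset (Finset ℕ)) : Prop :=
  ∃ T F, HT V d T ∧ F ⊆ PC V (d + 1) ∧ F.card ≤ k ∧ W = T ∆ F

theorem Ap.sub {V : Finset ℕ} {d k : ℕ} {W : Finset (Finset ℕ)} (h : Ap V d k W) :
    W ⊆ PC V (d + 1) := by
  obtain ⟨T, F, hT, hF, hk, rfl⟩ := h
  exact sd_sub hT.sub hF

theorem Ap.mono {V : Finset ℕ} {d k k' : ℕ} {W : Finset (Finset ℕ)} (h : Ap V d k W)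
    (hk : k ≤ k') : Ap V d k' W := by
  obtain ⟨T, F, hT, hF, hk', rfl⟩ := h
  exact ⟨T, F, hT, hF, hk'.trans hk, rfl⟩

theorem card_sd_le (X Y : Finset (Finset ℕ)) : (X ∆ Y).card ≤ X.card + Y.card := by
  rw [symmDiff_def, sup_eq_union]
  exact (card_union_le _ _).trans (add_le_add (card_le_card sdiff_subset) (card_le_card sdiff_subset))

theorem Ap.cone {V : Finset ℕ} {d k k' v : ℕ} {W W' : Finset (Finset ℕ)} (hv : v ∉ V)
    (h : Ap V d k W) (h' : Ap V (d + 1) k' W') :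
    Ap (insert v V) (d + 1) (k + k') (cone v W ∆ W') := by
  obtain ⟨T, F, hT, hF, hk, rfl⟩ := h
  obtain ⟨S, G, hS, hG, hk', rfl⟩ := h'
  refine ⟨_, _root_.cone v F ∆ G, hT.cone hv hS, sd_sub (cone_sub hF hv) (hG.trans PC_mono), ?_, ?_⟩
  · refine (card_sd_le _ _).trans (add_le_add ?_ hk')
    exact card_image_le.trans hk
  · rw [cone_symmDiff (Av_of_sub hT.sub hv) (Av_of_sub hF hv)]
    exact symmDiff_symmDiff_symmDiff_comm _ _ _ _

/-- The recursion step. -/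
theorem step {V : Finset ℕ} {d k k' v : ℕ} {Z W W' : Finset (Finset ℕ)} (hv : v ∉ V)
    (h : Ap V d k W) (h' : Ap V (d + 1) k' W')
    (hW : bd W = link v Z) (hW' : bd W' = anti v Z ∆ W) :
    ∃ U, Ap (insert v V) (d + 1) (k + k') U ∧ bd U = Z ∧ link v U = W ∧ anti v U = W' := by
  have a1 := Av_of_sub h.sub hv
  have a2 := Av_of_sub h'.sub hv
  refine ⟨_, h.cone hv h', ?_, link_decomp a1 a2, anti_decomp a1 a2⟩
  rw [bd_decomp a1, hW, hW']
  conv_rhs => rw [decomp v Z]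
  congr 1
  rw [symmDiff_comm (anti v Z), symmDiff_symmDiff_cancel_left]

/-- The residual cycle. -/
theorem resid {V : Finset ℕ} {d k v : ℕ} {Z W : Finset (Finset ℕ)}
    (hZ : Z ⊆ PC (insert v V) (d + 1)) (hc : bd Z = ∅) (h : Ap V d k W) (hW : bd W = link v Z) :
    anti v Z ∆ W ⊆ PC V (d + 1) ∧ bd (anti v Z ∆ W) = ∅ := by
  refine ⟨sd_sub (anti_sub hZ) h.sub, ?_⟩
  rw [bd_symmDiff, hW, (cycle_decomp hc).2, symmDiff_self]; rfl

theorem bd_single_ne {V : Finset ℕ} {d : ℕ} (hV : V.card = d + 1) : bd {V} ≠ ∅ := by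
  obtain ⟨v, hv⟩ : V.Nonempty := by rw [← card_pos]; omega
  intro h
  have e := insert_erase hv
  have hn := notMem_erase v V
  rw [← e, bd_single_insert hn] at h
  have := (decomp_empty (Av_bd (by simp [Av])) (by simp [Av]) h).2
  simp at this

theorem base_cycles {V : Finset ℕ} {d : ℕ} (hV : V.card = d + 1) {Z : Finset (Finset ℕ)}
    (hZ : Z ⊆ PC V d) (hc : bd Z = ∅) : Z = ∅ ∨ Z = bd {V} := by
  obtain ⟨v, hv⟩ : V.Nonempty := by rw [← card_pos]; omega
  have main : ∀ Z ⊆ PC V d, bd Z = ∅ → V.erase v ∉ Z → Z = ∅ := by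
    intro Z hZ hc hn
    have hR : anti v Z = ∅ := by
      rw [eq_empty_iff_forall_notMem]
      intro σ hσ
      rw [anti, mem_filter] at hσ
      have h1 := mem_powersetCard.1 (hZ hσ.1)
      have h2 : σ ⊆ V.erase v := subset_erase.2 ⟨h1.1, hσ.2⟩
      have h3 := card_erase_of_mem hv
      have := eq_of_subset_of_card_le h2 (by omega)
      exact hn (this ▸ hσ.1)
    have := (cycle_decomp (v := v) hc).2
    rw [hR, bd_empty'] at this
    rw [decomp v Z, hR, ← this, cone_empty', symmDiff_self]; rfl
  have hVs : ({V} : Finset (Finset ℕ)) ⊆ PC V (d + 1) := by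
    simp [mem_powersetCard, hV]
  by_cases h : V.erase v ∈ Z
  · right
    rw [← sd_eq_empty]
    refine main _ (sd_sub hZ (bd_sub hVs)) ?_ ?_
    · rw [bd_symmDiff, hc, bd_bd, symmDiff_self]; rfl
    · have : V.erase v ∈ bd {V} := by
        rw [mem_bd]
        have h3 := card_erase_add_one hv
        simp [filter_singleton, erase_subset, h3]
      simp [mem_symmDiff, h, this]
  · exact Or.inl (main Z hZ hc h)

theorem HT_base {V : Finset ℕ} {d : ℕ} (hV : V.card = d + 1) : HT V d {V} where
  sub := by simp [mem_powersetCard, hV]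
  acyc := by
    intro Y hY h0
    rcases subset_singleton_iff.1 hY with h | h
    · exact h
    · rw [h] at h0; exact absurd h0 (bd_single_ne hV)
  span := by
    intro Z hZ hc
    rcases base_cycles hV hZ hc with h | h
    · exact ⟨∅, by simp, by rw [h, bd_empty']⟩
    · exact ⟨{V}, by simp, h.symm⟩

theorem HT.Ap {V : Finset ℕ} {d : ℕ} {T : Finset (Finset ℕ)} (h : HT V d T) : Ap V d 0 T :=
  ⟨T, ∅, h, by simp, by simp, by rw [← bot_eq_empty, symmDiff_bot]⟩

theorem base {V : Finset ℕ} {d : ℕ} (hV : V.card = d + 1) {Z : Finset (Finset ℕ)}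
    (hZ : Z ⊆ PC V d) (hc : bd Z = ∅) : ∃ W, Ap V d 1 W ∧ bd W = Z := by
  rcases base_cycles hV hZ hc with h | h
  · refine ⟨∅, ⟨{V}, {V}, HT_base hV, by simp [mem_powersetCard, hV], by simp, ?_⟩, ?_⟩
    · rw [symmDiff_self]; rfl
    · rw [h, bd_empty']
  · exact ⟨{V}, (HT_base hV).Ap.mono (by omega), h.symm⟩

theorem base_nt {V : Finset ℕ} {d : ℕ} (hV : V.card = d + 1) {Z : Finset (Finset ℕ)}
    (hZ : Z ⊆ PC V d) (hc : bd Z = ∅) (hne : Z ≠ ∅) : ∃ W, Ap V d 0 W ∧ bd W = Z := by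
  rcases base_cycles hV hZ hc with h | h
  · exact absurd h hne
  · exact ⟨{V}, (HT_base hV).Ap, h.symm⟩

theorem bd_pt (w : ℕ) : bd {{w}} = {∅} := by
  have := bd_single_insert (v := w) (σ := ∅) (by simp)
  rw [bd_single_empty, cone_empty'] at this
  exact this.trans (bot_symmDiff _)

theorem HT_pt {V : Finset ℕ} {w : ℕ} (hw : w ∈ V) : HT V 0 {{w}} where
  sub := by simp [mem_powersetCard, hw]
  acyc := by
    intro Y hY h0
    rcases subset_singleton_iff.1 hY with h | h
    · exact h
    · rw [h, bd_pt] at h0; simp at h0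
  span := by
    intro Z hZ hc
    have : Z ⊆ {∅} := by simpa using hZ
    rcases subset_singleton_iff.1 this with h | h
    · exact ⟨∅, by simp, by rw [h, bd_empty']⟩
    · exact ⟨{{w}}, by simp, by rw [h, bd_pt]⟩

theorem Ap_bd : ∀ (d : ℕ) (V : Finset ℕ), V.card = d + 2 → Ap V d 1 (bd {V}) := by
  intro d
  induction d with
  | zero =>
    intro V hV
    obtain ⟨a, b, hab, rfl⟩ := card_eq_two.1 hV
    refine ⟨{{a}}, {{b}}, HT_pt (by simp), by simp [mem_powersetCard], by simp, ?_⟩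
    rw [bd_single_insert (by simpa using hab), bd_pt]
    simp [_root_.cone]
  | succ d ih =>
    intro V hV
    obtain ⟨v, hv⟩ : V.Nonempty := by rw [← card_pos]; omega
    have h3 := card_erase_add_one hv
    have hn := notMem_erase v V
    have := (ih (V.erase v) (by omega)).cone hn (HT_base (V := V.erase v) (d := d + 1) (by omega)).Ap
    rwa [← bd_single_insert hn, insert_erase hv] at this

theorem exists_vertex {V : Finset ℕ} {d : ℕ} {Z : Finset (Finset ℕ)}
    (hZ : Z ⊆ PC V (d + 1)) (hne : Z ≠ ∅) :
    ∃ v V', v ∉ V' ∧ V = insert v V' ∧ link v Z ≠ ∅ := by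
  obtain ⟨σ, hσ⟩ := nonempty_iff_ne_empty.2 hne
  have h1 := mem_powersetCard.1 (hZ hσ)
  obtain ⟨v, hv⟩ : σ.Nonempty := by rw [← card_pos]; omega
  refine ⟨v, V.erase v, notMem_erase _ _, (insert_erase (h1.1 hv)).symm, ?_⟩
  apply nonempty_iff_ne_empty.1
  exact ⟨σ.erase v, (mem_link _).2 ⟨notMem_erase _ _, by rwa [insert_erase hv]⟩⟩

theorem link_zero {V : Finset ℕ} {v : ℕ} {Z : Finset (Finset ℕ)}
    (hZ : Z ⊆ PC (insert v V) 1) (hne : link v Z ≠ ∅) (w : ℕ) : bd {{w}} = link v Z := by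
  have h := link_sub (k := 0) hZ
  have : link v Z ⊆ {∅} := by simpa using h
  rcases subset_singleton_iff.1 this with h | h
  · exact absurd h hne
  · rw [bd_pt, h]

theorem sd_ne {X Y : Finset (Finset ℕ)} (h : Y ≠ X) : X ∆ Y ≠ ∅ := by
  rw [Ne, sd_eq_empty]; exact fun h' => h h'.symm

theorem pick1 {V : Finset ℕ} (hV : 2 ≤ V.card) (A : Finset (Finset ℕ)) :
    ∃ w ∈ V, ({{w}} : Finset (Finset ℕ)) ≠ A := by
  obtain ⟨a, ha, b, hb, hab⟩ := one_lt_card.1 hV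
  by_cases h : ({{a}} : Finset (Finset ℕ)) = A
  · refine ⟨b, hb, ?_⟩
    rw [← h]; simpa using hab.symm
  · exact ⟨a, ha, h⟩

theorem pick2 {V : Finset ℕ} (hV : 3 ≤ V.card) (A B : Finset (Finset ℕ)) :
    ∃ w ∈ V, ({{w}} : Finset (Finset ℕ)) ≠ A ∧ ({{w}} : Finset (Finset ℕ)) ≠ B := by
  obtain ⟨a, ha, h⟩ := pick1 (by omega : 2 ≤ V.card) A
  by_cases hB : ({{a}} : Finset (Finset ℕ)) = B
  · have h3 := card_erase_add_one ha
    obtain ⟨b, hb, h'⟩ := pick1 (by omega : 2 ≤ (V.erase a).card) A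
    rw [mem_erase] at hb
    refine ⟨b, hb.2, h', ?_⟩
    rw [← hB]; simpa using hb.1
  · exact ⟨a, ha, h, hB⟩

theorem ex13 {V : Finset ℕ} (hV : V.card = 3) {Z : Finset (Finset ℕ)}
    (hZ : Z ⊆ PC V 1) (hc : bd Z = ∅) (hne : Z ≠ ∅) : ∃ W, Ap V 1 0 W ∧ bd W = Z := by
  obtain ⟨v, V, hv, rfl, hL⟩ := exists_vertex hZ hne
  rw [card_insert_of_notMem hv] at hV
  obtain ⟨w, hw, hwR⟩ := pick1 (by omega : 2 ≤ V.card) (anti v Z)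
  have hA := (HT_pt hw).Ap
  have hb := link_zero hZ hL w
  obtain ⟨r1, r2⟩ := resid hZ hc hA hb
  obtain ⟨W', hW', hb'⟩ := base_nt (d := 1) (by omega) r1 r2 (sd_ne hwR)
  obtain ⟨U, h1, h2, -⟩ := step hv hA hW' hb hb'
  exact ⟨U, h1, h2⟩

theorem Q1 : ∀ (n : ℕ) (V : Finset ℕ), V.card = n + 4 → ∀ Z ⊆ PC V 1, bd Z = ∅ → Z ≠ ∅ →
    ∀ A, ∃ W, Ap V 1 0 W ∧ bd W = Z ∧ W ≠ A := by
  intro n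
  induction n with
  | zero =>
    intro V hV Z hZ hc hne A
    obtain ⟨v, V, hv, rfl, hL⟩ := exists_vertex hZ hne
    rw [card_insert_of_notMem hv] at hV
    obtain ⟨w, hw, hwR, hwA⟩ := pick2 (by omega : 3 ≤ V.card) (anti v Z) (link v A)
    have hA := (HT_pt hw).Ap
    have hb := link_zero hZ hL w
    obtain ⟨r1, r2⟩ := resid hZ hc hA hb
    obtain ⟨W', hW', hb'⟩ := ex13 (by omega) r1 r2 (sd_ne hwR)
    obtain ⟨U, h1, h2, h3, h4⟩ := step hv hA hW' hb hb'
    refine ⟨U, h1, h2, ?_⟩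
    rintro rfl
    exact hwA h3.symm
  | succ n ih =>
    intro V hV Z hZ hc hne A
    obtain ⟨v, V, hv, rfl, hL⟩ := exists_vertex hZ hne
    rw [card_insert_of_notMem hv] at hV
    obtain ⟨w, hw, hwR⟩ := pick1 (by omega : 2 ≤ V.card) (anti v Z)
    have hA := (HT_pt hw).Ap
    have hb := link_zero hZ hL w
    obtain ⟨r1, r2⟩ := resid hZ hc hA hb
    obtain ⟨W', hW', hb', hWA⟩ := ih V (by omega) _ r1 r2 (sd_ne hwR) (anti v A)
    obtain ⟨U, h1, h2, h3, h4⟩ := step hv hA hW' hb hb'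
    refine ⟨U, h1, h2, ?_⟩
    rintro rfl
    exact hWA h4.symm

theorem base' : ∀ (e : ℕ) (V : Finset ℕ), V.card = e + 4 → ∀ Z ⊆ PC V (e + 2), bd Z = ∅ →
    ∃ W, Ap V (e + 2) ((e + 3).choose e) W ∧ bd W = Z := by
  intro e
  induction e with
  | zero =>
    intro V hV Z hZ hc
    by_cases hne : Z = ∅
    · exact ⟨bd {V}, by simpa using Ap_bd 2 V hV, by rw [bd_bd, hne]⟩
    · obtain ⟨v, V, hv, rfl, hL⟩ := exists_vertex hZ hne
      rw [card_insert_of_notMem hv] at hV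
      obtain ⟨W, hW, hb⟩ := ex13 (by omega) (link_sub hZ) (cycle_decomp hc).1 hL
      obtain ⟨r1, r2⟩ := resid hZ hc hW hb
      obtain ⟨W', hW', hb'⟩ := base (d := 2) (by omega) r1 r2
      obtain ⟨U, h1, h2, -⟩ := step hv hW hW' hb hb'
      exact ⟨U, by simpa using h1, h2⟩
  | succ e ih =>
    intro V hV Z hZ hc
    obtain ⟨v, hv'⟩ : V.Nonempty := by rw [← card_pos]; omega
    obtain ⟨V, hv, rfl⟩ : ∃ V', v ∉ V' ∧ V = insert v V' :=
      ⟨V.erase v, notMem_erase _ _, (insert_erase hv').symm⟩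
    rw [card_insert_of_notMem hv] at hV
    obtain ⟨W, hW, hb⟩ := ih V (by omega) _ (link_sub hZ) (cycle_decomp hc).1
    obtain ⟨r1, r2⟩ := resid hZ hc hW hb
    obtain ⟨W', hW', hb'⟩ := base (d := e + 2 + 1) (by omega) r1 r2
    obtain ⟨U, h1, h2, -⟩ := step hv hW hW' hb hb'
    refine ⟨U, h1.mono ?_, h2⟩
    have := Nat.choose_succ_succ (e + 3) e
    have h3 : 0 < (e + 3).choose (e + 1) := Nat.choose_pos (by omega)
    simp only [Nat.succ_eq_add_one] at this
    show _ ≤ (e + 3 + 1).choose (e + 1)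
    omega

/-- the bound -/
def fb (n d : ℕ) : ℕ := if 2 ≤ d then (n - 1).choose (d - 2) else 0

theorem fb_rec (n d : ℕ) (hd : 1 ≤ d) (hn : 1 ≤ n) : fb n d + fb n (d + 1) ≤ fb (n + 1) (d + 1) := by
  obtain ⟨m, rfl⟩ : ∃ m, n = m + 1 := ⟨n - 1, by omega⟩
  rcases Nat.lt_or_ge d 2 with h | h
  · have : d = 1 := by omega
    subst this
    simp [fb]
  · obtain ⟨e, rfl⟩ : ∃ e, d = e + 2 := ⟨d - 2, by omega⟩
    have := Nat.choose_succ_succ m e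
    simp only [fb, Nat.succ_eq_add_one] at *
    simp only [show 2 ≤ e + 2 by omega, show 2 ≤ e + 2 + 1 by omega, if_true,
      show e + 2 - 2 = e by omega, show e + 2 + 1 - 2 = e + 1 by omega,
      show m + 1 - 1 = m by omega, show m + 1 + 1 - 1 = m + 1 by omega]
    omega

theorem Q : ∀ (d n : ℕ) (V : Finset ℕ), V.card = n + (d + 1) + 3 → ∀ Z ⊆ PC V (d + 1), bd Z = ∅ →
    Z ≠ ∅ → ∀ A, ∃ W, Ap V (d + 1) (fb V.card (d + 1)) W ∧ bd W = Z ∧ W ≠ A := by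
  intro d
  induction d with
  | zero =>
    intro n V hV Z hZ hc hne A
    simpa [fb] using Q1 n V (by omega) Z hZ hc hne A
  | succ d ihd =>
    intro n
    induction n with
    | zero =>
      intro V hV Z hZ hc hne A
      obtain ⟨v, V, hv, rfl, hL⟩ := exists_vertex hZ hne
      rw [card_insert_of_notMem hv] at hV ⊢
      obtain ⟨W, hW, hb, hWA⟩ := ihd 0 V (by omega) _ (link_sub hZ) (cycle_decomp hc).1 hL (link v A)
      obtain ⟨r1, r2⟩ := resid hZ hc hW hb
      obtain ⟨W', hW', hb'⟩ := base' d V (by omega) _ r1 r2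
      obtain ⟨U, h1, h2, h3, h4⟩ := step hv hW hW' hb hb'
      refine ⟨U, h1.mono ?_, h2, ?_⟩
      · refine le_trans ?_ (fb_rec V.card (d + 1) (by omega) (by omega))
        have : fb V.card (d + 1 + 1) = (d + 3).choose d := by
          have e : V.card = d + 4 := by omega
          simp [fb, e]
        rw [this]
      · rintro rfl
        exact hWA h3.symm
    | succ n ihn =>
      intro V hV Z hZ hc hne A
      obtain ⟨v, V, hv, rfl, hL⟩ := exists_vertex hZ hne
      rw [card_insert_of_notMem hv] at hV ⊢
      obtain ⟨W, hW, hb, hWR⟩ :=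
        ihd (n + 1) V (by omega) _ (link_sub hZ) (cycle_decomp hc).1 hL (anti v Z)
      obtain ⟨r1, r2⟩ := resid hZ hc hW hb
      obtain ⟨W', hW', hb', hWA⟩ := ihn V (by omega) _ r1 r2 (sd_ne hWR) (anti v A)
      obtain ⟨U, h1, h2, h3, h4⟩ := step hv hW hW' hb hb'
      refine ⟨U, h1.mono (fb_rec V.card (d + 1) (by omega) (by omega)), h2, ?_⟩
      rintro rfl
      exact hWA h4.symm

theorem main_ex (d : ℕ) (V : Finset ℕ) (hV : d + 2 ≤ V.card) (Z : Finset (Finset ℕ))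
    (hZ : Z ⊆ PC V (d + 1)) (hc : bd Z = ∅) (hne : Z ≠ ∅) :
    ∃ W, Ap V (d + 1) (fb V.card (d + 1)) W ∧ bd W = Z := by
  rcases Nat.lt_or_ge V.card (d + 3) with h | h
  · obtain ⟨W, h1, h2⟩ := base_nt (d := d + 1) (by omega) hZ hc hne
    exact ⟨W, h1.mono (by omega), h2⟩
  rcases Nat.lt_or_ge V.card (d + 4) with h' | h'
  · rcases d with _ | d
    · obtain ⟨W, h1, h2⟩ := ex13 (by omega) hZ hc hne
      exact ⟨W, h1.mono (by omega), h2⟩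
    · obtain ⟨W, h1, h2⟩ := base' d V (by omega) Z hZ hc
      refine ⟨W, h1.mono ?_, h2⟩
      have e : V.card = d + 4 := by omega
      simp [fb, e]
  · obtain ⟨W, h1, h2, -⟩ := Q d (V.card - (d + 4)) V (by omega) Z hZ hc hne ∅
    exact ⟨W, h1, h2⟩

theorem card_bd_le {V : Finset ℕ} {d : ℕ} {F : Finset (Finset ℕ)} (hF : F ⊆ PC V (d + 1)) :
    (bd F).card ≤ (d + 1) * F.card := by
  have : bd F ⊆ F.biUnion fun σ => powersetCard d σ := by
    intro τ hτ
    rw [mem_bd] at hτ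
    obtain ⟨σ, hσ⟩ := Finset.card_pos.mp hτ.pos
    simp only [mem_filter] at hσ
    have := mem_powersetCard.1 (hF hσ.1)
    exact mem_biUnion.2 ⟨σ, hσ.1, mem_powersetCard.2 ⟨hσ.2.1, by omega⟩⟩
  refine (card_le_card this).trans ?_
  rw [mul_comm]
  refine card_biUnion_le_card_mul _ _ _ ?_
  intro σ hσ
  have := mem_powersetCard.1 (hF hσ)
  rw [card_powersetCard, this.2]
  simp

/-- For `d ≥ 1`, `n ≥ d+1` and every nontrivial `(d-1)`-cycle `Z` on `[n]` over `F_2`,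
there is a `(d-1)`-cycle `Z'` on `[n]` which is the boundary of a `d`-hypertree on `[n]`
and satisfies `|Z ⊕ Z'| ≤ (d+1)·C(n-1,d-2)` (with `C(m,k) = 0` for `k < 0`). -/
theorem exists_nearby_hypertree_boundary (d n : ℕ) (hd : 1 ≤ d) (hn : d + 1 ≤ n)
    (Z : Finset (Finset ℕ)) (hZ : Z ⊆ simplices (rng n) (d - 1))
    (hZcyc : bd Z = ∅) (hZne : Z ≠ ∅) :
    ∃ Z', Z' ⊆ simplices (rng n) (d - 1) ∧ bd Z' = ∅ ∧
      (∃ T, IsHypertreeOn (rng n) d T ∧ bd T = Z') ∧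
      (Z ∆ Z').card ≤ (d + 1) * (if 2 ≤ d then (n - 1).choose (d - 2) else 0) := by
  obtain ⟨d, rfl⟩ : ∃ e, d = e + 1 := ⟨d - 1, by omega⟩
  have hs : ∀ k, simplices (rng n) k = PC (rng n) (k + 1) := by
    intro k; ext σ; simp [simplices, mem_powersetCard]
  have hcard : (rng n).card = n := by simp [rng]
  rw [hs] at hZ ⊢
  simp only [Nat.add_sub_cancel] at hZ ⊢
  obtain ⟨W, ⟨T, F, hT, hF, hk, rfl⟩, hb⟩ := main_ex d (rng n) (by omega) Z hZ hZcyc hZne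
  refine ⟨bd T, bd_sub hT.sub, bd_bd T, ⟨T, hT.isHypertree, rfl⟩, ?_⟩
  have : Z ∆ bd T = bd F := by
    rw [← hb, bd_symmDiff, symmDiff_comm, symmDiff_symmDiff_cancel_left]
  rw [this]
  refine (card_bd_le hF).trans (Nat.mul_le_mul_left _ ?_)
  rw [hcard] at hk
  exact hk
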